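/- arXiv:1802.01402 — 12 statements merged into one kernel-verified Lean document; each statement's English description precedes it below -/
import Mathlib

section
/- Let g_1, …, g_m be vectors in ℝ^n and let θ* = min_{v ∈ ℝ^n} ( max_i ⟨g_i, v⟩ + (1/2)‖v‖² ). Then θ* equals the maximum, over all α ∈ ℝ^m with α_i ≥ 0 and Σ_{i=1}^m α_i = 1, of −(1/2)‖Σ_{i=1}^m α_i g_i‖² (strong duality between the primal steepest-descent problem and its dual over the unit simplex). -/
/-!
Strong duality follows from projecting the origin onto the convex hull of the `g i`.

Weak duality: averaging the `⟪g i, v⟫` with weights `α` bounds their maximum from below by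
`⟪p, v⟫`, where `p = ∑ i, α i • g i`, and
`⟪p, v⟫ + (1/2)‖v‖² = (1/2)‖p + v‖² - (1/2)‖p‖² ≥ -(1/2)‖p‖²`.

Equality: let `p` be the point of least norm in the hull (`exists_simplex_comb_sq_norm_le_inner`).
The variational inequality for projections gives `‖p‖² ≤ ⟪p, g i⟫` for every `i`, so `v = -p` has
primal value at most `-‖p‖² + (1/2)‖p‖² = -(1/2)‖p‖²`, the dual value of the weights
that represent `p`.
-/

open scoped RealInnerProductSpace

/-- The convex hull of finitely many vectors contains a point `p` (its point of least norm) with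
`‖p‖² ≤ ⟪p, g i⟫` for all `i`. -/
theorem exists_simplex_comb_sq_norm_le_inner {E : Type*} [NormedAddCommGroup E]
    [InnerProductSpace ℝ E] {m : ℕ} (hm : 0 < m) (g : Fin m → E) :
    ∃ α : Fin m → ℝ, (∀ i, 0 ≤ α i) ∧ (∑ i, α i) = 1 ∧
      ∀ i, ‖∑ j, α j • g j‖ ^ 2 ≤ ⟪∑ j, α j • g j, g i⟫ := by
  set L : (Fin m → ℝ) →ₗ[ℝ] E := Fintype.linearCombination ℝ g with hL
  have hLα : ∀ α, L α = ∑ j, α j • g j := fun α => Fintype.linearCombination_apply ℝ g α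
  have hcont : Continuous L := by
    have h : (L : (Fin m → ℝ) → E) = fun α => ∑ j, α j • g j := funext hLα
    rw [h]
    fun_prop
  have hconv : Convex ℝ (L '' stdSimplex ℝ (Fin m)) :=
    (convex_stdSimplex ℝ (Fin m)).linear_image L
  have hvertex : ∀ i, g i ∈ L '' stdSimplex ℝ (Fin m) := fun i =>
    ⟨Pi.single i 1, single_mem_stdSimplex ℝ i, by simp [hL]⟩
  obtain ⟨p, hp, hmin⟩ := exists_norm_eq_iInf_of_complete_convex ⟨_, hvertex ⟨0, hm⟩⟩
    ((isCompact_stdSimplex ℝ (Fin m)).image hcont).isComplete hconv (0 : E)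
  have hvar := (norm_eq_iInf_iff_real_inner_le_zero hconv hp).1 hmin
  obtain ⟨α, hα, rfl⟩ := hp
  refine ⟨α, hα.1, hα.2, fun i => ?_⟩
  have h := hvar _ (hvertex i)
  rw [zero_sub, inner_neg_left, inner_sub_right, real_inner_self_eq_norm_sq] at h
  rw [← hLα]
  linarith

/-- Weak duality: the dual value at simplex weights `α` is at most any upper bound `M` on the
`⟪g i, v⟫` plus `(1/2)‖v‖²`. -/
theorem neg_half_sq_norm_comb_le {E : Type*} [NormedAddCommGroup E] [InnerProductSpace ℝ E]
    {m : ℕ} (g : Fin m → E) {α : Fin m → ℝ} (hα : ∀ i, 0 ≤ α i) (hsum : ∑ i, α i = 1)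
    {v : E} {M : ℝ} (hM : ∀ i, ⟪g i, v⟫ ≤ M) :
    -(1 / 2) * ‖∑ i, α i • g i‖ ^ 2 ≤ M + (1 / 2) * ‖v‖ ^ 2 := by
  have havg : ⟪∑ i, α i • g i, v⟫ ≤ M := by
    calc ⟪∑ i, α i • g i, v⟫ = ∑ i, α i * ⟪g i, v⟫ := by
          simp only [sum_inner, real_inner_smul_left]
      _ ≤ ∑ i, α i * M :=
          Finset.sum_le_sum fun i _ => mul_le_mul_of_nonneg_left (hM i) (hα i)
      _ = M := by rw [← Finset.sum_mul, hsum, one_mul]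
  have hsq := norm_add_sq_real (∑ i, α i • g i) v
  nlinarith [sq_nonneg ‖∑ i, α i • g i + v‖]

/-- Strong duality: the optimal value `θ*` of
`min_v max_i ⟪g i, v⟫ + (1/2)‖v‖²` equals the maximum over the unit simplex of
`-(1/2)‖∑ α_i g_i‖²`. -/
theorem steepest_descent_strong_duality (n m : ℕ) (hm : 0 < m)
    (g : Fin m → EuclideanSpace ℝ (Fin n)) (θstar : ℝ)
    (hθ : IsLeast (Set.range fun v : EuclideanSpace ℝ (Fin n) =>
        (Finset.univ.sup' (Finset.univ_nonempty_iff.mpr (Fin.pos_iff_nonempty.mp hm))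
            fun i => ⟪g i, v⟫) + (1 / 2) * ‖v‖ ^ 2) θstar) :
    IsGreatest {r : ℝ | ∃ α : Fin m → ℝ, (∀ i, 0 ≤ α i) ∧ (∑ i, α i) = 1 ∧
        r = -(1 / 2) * ‖∑ i, α i • g i‖ ^ 2} θstar := by
  obtain ⟨⟨v, hv⟩, hlow⟩ := hθ
  have weak : ∀ α : Fin m → ℝ, (∀ i, 0 ≤ α i) → (∑ i, α i) = 1 →
      -(1 / 2) * ‖∑ i, α i • g i‖ ^ 2 ≤ θstar := by
    intro α hα hsum
    rw [← hv]
    exact neg_half_sq_norm_comb_le g hα hsum fun i =>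
      Finset.le_sup' (fun i => ⟪g i, v⟫) (Finset.mem_univ i)
  refine ⟨?_, ?_⟩
  · obtain ⟨α, hα, hsum, hp⟩ := exists_simplex_comb_sq_norm_le_inner hm g
    refine ⟨α, hα, hsum, le_antisymm ?_ (weak α hα hsum)⟩
    set p := ∑ i, α i • g i
    have hle := hlow ⟨-p, rfl⟩
    have hsup : (Finset.univ.sup' (Finset.univ_nonempty_iff.mpr (Fin.pos_iff_nonempty.mp hm))
        fun i => ⟪g i, -p⟫) ≤ -‖p‖ ^ 2 := by
      refine Finset.sup'_le _ _ fun i _ => ?_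
      rw [inner_neg_right, real_inner_comm]
      exact neg_le_neg (hp i)
    simp only [norm_neg] at hle
    linarith
  · rintro r ⟨α, hα, hsum, rfl⟩
    exact weak α hα hsum
end

section
/- Let f_1, …, f_m : ℝ^n → ℝ be differentiable at x. Then θ_f(x) = −(1/2)‖Λf(x)‖². -/
open scoped RealInnerProductSpace

/-!
The function `v ↦ max_i ⟪∇f_i(x), v⟫` is positively homogeneous. Writing `S` for its value at `Λ`,
the objective restricted to the ray `t ↦ t • Λ`, `t ≥ 0`, is `t * S + t ^ 2 * ‖Λ‖ ^ 2 / 2`.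
Minimality of `Λ` makes `t = 1` an interior minimum of this quadratic, so its derivative
`S + ‖Λ‖ ^ 2` vanishes there, which is the claim.
-/

/-- `θ_f(x) = -(1/2)‖Λf(x)‖²`, where `Λf(x)` is the minimizer of
`v ↦ max_i ⟪∇f_i(x), v⟫ + (1/2)‖v‖²` and `θ_f(x)` the optimal value. -/
theorem theta_eq_neg_half_norm_sq (n m : ℕ) (hm : 0 < m)
    (f : Fin m → EuclideanSpace ℝ (Fin n) → ℝ) (x : EuclideanSpace ℝ (Fin n))
    (hdiff : ∀ i, DifferentiableAt ℝ (f i) x)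
    (Λ : EuclideanSpace ℝ (Fin n))
    (hmin : ∀ w : EuclideanSpace ℝ (Fin n),
      (Finset.univ.sup' (Finset.univ_nonempty_iff.mpr (Fin.pos_iff_nonempty.mp hm))
          fun i => ⟪gradient (f i) x, Λ⟫) + (1 / 2) * ‖Λ‖ ^ 2 ≤
      (Finset.univ.sup' (Finset.univ_nonempty_iff.mpr (Fin.pos_iff_nonempty.mp hm))
          fun i => ⟪gradient (f i) x, w⟫) + (1 / 2) * ‖w‖ ^ 2) :
    (Finset.univ.sup' (Finset.univ_nonempty_iff.mpr (Fin.pos_iff_nonempty.mp hm))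
        fun i => ⟪gradient (f i) x, Λ⟫) + (1 / 2) * ‖Λ‖ ^ 2 =
      -(1 / 2) * ‖Λ‖ ^ 2 := by
  set S := Finset.univ.sup' (Finset.univ_nonempty_iff.mpr (Fin.pos_iff_nonempty.mp hm))
    fun i => ⟪gradient (f i) x, Λ⟫ with hS
  have hray : ∀ t : ℝ, 0 ≤ t →
      S + (1 / 2) * ‖Λ‖ ^ 2 ≤ t * S + (1 / 2) * (t ^ 2 * ‖Λ‖ ^ 2) := by
    intro t ht
    have h := hmin (t • Λ)
    rw [norm_smul, mul_pow, Real.norm_eq_abs, sq_abs] at h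
    refine h.trans (add_le_add_left (Finset.sup'_le _ _ fun i _ => ?_) _)
    rw [real_inner_smul_right]
    exact mul_le_mul_of_nonneg_left
      (Finset.le_sup' (fun i => ⟪gradient (f i) x, Λ⟫) (Finset.mem_univ i)) ht
  have hloc : IsLocalMin (fun t : ℝ => t * S + (1 / 2) * (t ^ 2 * ‖Λ‖ ^ 2)) 1 := by
    filter_upwards [lt_mem_nhds (zero_lt_one (α := ℝ))] with t ht
    simpa using hray t ht.le
  have hder : HasDerivAt (fun t : ℝ => t * S + (1 / 2) * (t ^ 2 * ‖Λ‖ ^ 2)) (S + ‖Λ‖ ^ 2) 1 := by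
    have h := ((hasDerivAt_id' (1 : ℝ)).mul_const S).fun_add
      (((hasDerivAt_pow 2 (1 : ℝ)).mul_const (‖Λ‖ ^ 2)).const_mul (1 / 2))
    exact h.congr_deriv (by push_cast; ring)
  have h0 := hloc.hasDerivAt_eq_zero hder
  linarith
end

section
/- Let f_1, …, f_m : ℝ^n → ℝ be differentiable at x. Then −Λf(x) is the (unique) element of minimal norm of the convex hull of {∇f_1(x), …, ∇f_m(x)}; equivalently, −Λf(x) is the orthogonal projection of the origin onto the convex hull of {∇f_1(x), …, ∇f_m(x)}. -/
/-!
Let `p` be the projection of the origin onto the convex hull `K` of the gradients, so that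
`‖p‖ ^ 2 ≤ ⟪w, p⟫` for all `w ∈ K`. Testing minimality of `Λ` against `-p` bounds the optimal value
above by `-‖p‖ ^ 2 / 2`; since a linear functional on `K` is dominated by its value at some gradient,
the optimal value is also at least `⟪p, Λ⟫ + ‖Λ‖ ^ 2 / 2`. Together these say `‖p + Λ‖ ^ 2 ≤ 0`,
i.e. `p = -Λ`. Minimality and uniqueness come from `‖u - p‖ ^ 2 ≤ ‖u‖ ^ 2 - ‖p‖ ^ 2` for `u ∈ K`.
-/


open scoped RealInnerProductSpace

/-- `-Λf(x)` is the element of minimal norm of the convex hull of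
`{∇f_1(x), …, ∇f_m(x)}`. -/
theorem neg_steepest_descent_eq_min_norm_convexHull (n m : ℕ) (hm : 0 < m)
    (f : Fin m → EuclideanSpace ℝ (Fin n) → ℝ) (x : EuclideanSpace ℝ (Fin n))
    (hdiff : ∀ i, DifferentiableAt ℝ (f i) x)
    (Λ : EuclideanSpace ℝ (Fin n))
    (hmin : ∀ w : EuclideanSpace ℝ (Fin n),
      (Finset.univ.sup' (Finset.univ_nonempty_iff.mpr (Fin.pos_iff_nonempty.mp hm))
          fun i => ⟪gradient (f i) x, Λ⟫) + (1 / 2) * ‖Λ‖ ^ 2 ≤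
      (Finset.univ.sup' (Finset.univ_nonempty_iff.mpr (Fin.pos_iff_nonempty.mp hm))
          fun i => ⟪gradient (f i) x, w⟫) + (1 / 2) * ‖w‖ ^ 2) :
    -Λ ∈ convexHull ℝ (Set.range fun i => gradient (f i) x) ∧
    ∀ u ∈ convexHull ℝ (Set.range fun i => gradient (f i) x), ‖-Λ‖ ≤ ‖u‖ ∧
    (‖u‖ = ‖-Λ‖ → u = -Λ) := by
  have hne : (Finset.univ : Finset (Fin m)).Nonempty :=
    Finset.univ_nonempty_iff.mpr (Fin.pos_iff_nonempty.mp hm)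
  set K := convexHull ℝ (Set.range fun i => gradient (f i) x) with hK
  have hgK : ∀ i, gradient (f i) x ∈ K := fun i => subset_convexHull ℝ _ ⟨i, rfl⟩
  have hKconv : Convex ℝ K := convex_convexHull ℝ _
  have hKcomp : IsCompact K := (Set.finite_range _).isCompact_convexHull ℝ
  obtain ⟨p, hpK, hp⟩ := exists_norm_eq_iInf_of_complete_convex
    ⟨_, hgK ⟨0, hm⟩⟩ hKcomp.isComplete hKconv 0
  have hvar : ∀ w ∈ K, ‖p‖ ^ 2 ≤ ⟪w, p⟫ := by
    intro w hw
    have h := (norm_eq_iInf_iff_real_inner_le_zero hKconv hpK).1 hp w hw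
    rw [zero_sub, inner_neg_left, inner_sub_right, real_inner_self_eq_norm_sq,
      real_inner_comm] at h
    linarith
  have hupper := hmin (-p)
  have hsup : (Finset.univ.sup' hne fun i => ⟪gradient (f i) x, -p⟫) ≤ -‖p‖ ^ 2 := by
    refine Finset.sup'_le _ _ fun i _ => ?_
    rw [inner_neg_right]
    linarith [hvar _ (hgK i)]
  -- The maximum of a linear functional over `K` is attained at one of the gradients.
  have hlower : ⟪p, Λ⟫ ≤ Finset.univ.sup' hne fun i => ⟪gradient (f i) x, Λ⟫ := by
    obtain ⟨_, ⟨i, rfl⟩, hi⟩ :=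
      ((innerₗ (EuclideanSpace ℝ (Fin n)) Λ).convexOn convex_univ).exists_ge_of_mem_convexHull
        (Set.subset_univ _) hpK
    simp only [innerₗ_apply_apply] at hi
    rw [real_inner_comm Λ p]
    refine hi.trans ?_
    rw [real_inner_comm]
    exact Finset.le_sup' (fun i => ⟪gradient (f i) x, Λ⟫) (Finset.mem_univ i)
  have hpΛ : p = -Λ := by
    have h := norm_add_sq_real p Λ
    rw [norm_neg] at hupper
    have h0 : ‖p + Λ‖ ^ 2 = 0 := le_antisymm (by linarith) (sq_nonneg _)
    exact eq_neg_of_add_eq_zero_left (norm_eq_zero.1 (pow_eq_zero_iff two_ne_zero |>.1 h0))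
  rw [← hpΛ]
  refine ⟨hpK, fun u hu => ?_⟩
  have hdist : ‖u - p‖ ^ 2 ≤ ‖u‖ ^ 2 - ‖p‖ ^ 2 := by
    rw [norm_sub_sq_real]
    linarith [hvar u hu]
  refine ⟨?_, fun h => ?_⟩
  · exact (sq_le_sq₀ (norm_nonneg p) (norm_nonneg u)).1 (by linarith [sq_nonneg ‖u - p‖])
  · rw [h, sub_self] at hdist
    exact sub_eq_zero.1 (norm_eq_zero.1
      (pow_eq_zero_iff two_ne_zero |>.1 (le_antisymm hdist (sq_nonneg _))))
end

section
/- Let f_1, …, f_m : ℝ^n → ℝ be differentiable at x. Then x is Pareto critical (there is no v ∈ ℝ^n with ⟨∇f_i(x), v⟩ < 0 for all i) if and only if Λf(x) = 0, which holds if and only if θ_f(x) = 0. Moreover, if x is not Pareto critical then θ_f(x) < 0 and Λf(x) ≠ 0. -/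
/-!
Write `φ v = maxᵢ ⟪∇fᵢ(x), v⟫`, which is positively homogeneous, so that `θ = φ Λ + ‖Λ‖² / 2` is the
minimum of `φ v + ‖v‖² / 2`. Comparing with `v = 0` gives `θ ≤ 0`, and `Λ = 0` forces `θ = 0`.
If some `v` has `φ v < 0`, the linear term of `φ (t v) + ‖t v‖² / 2 = t φ v + t² ‖v‖² / 2` dominates
for small `t > 0`, so `θ < 0` and hence `Λ ≠ 0`. If there is no such `v`, then `φ Λ ≥ 0`, and
`θ ≤ 0` forces `‖Λ‖ = 0`. The equivalence with `θ = 0` follows from these two cases.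
-/

open scoped RealInnerProductSpace

/-- `x` is Pareto critical iff `Λf(x) = 0`, iff `θ_f(x) = 0`;
and if `x` is not Pareto critical then `θ_f(x) < 0` and `Λf(x) ≠ 0`. -/
theorem pareto_critical_iff_lambda_zero (n m : ℕ) (hm : 0 < m)
    (f : Fin m → EuclideanSpace ℝ (Fin n) → ℝ) (x : EuclideanSpace ℝ (Fin n))
    (hdiff : ∀ i, DifferentiableAt ℝ (f i) x)
    (Λ : EuclideanSpace ℝ (Fin n)) (θ : ℝ)
    (hmin : ∀ w : EuclideanSpace ℝ (Fin n),
      (Finset.univ.sup' (Finset.univ_nonempty_iff.mpr (Fin.pos_iff_nonempty.mp hm))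
          fun i => ⟪gradient (f i) x, Λ⟫) + (1 / 2) * ‖Λ‖ ^ 2 ≤
      (Finset.univ.sup' (Finset.univ_nonempty_iff.mpr (Fin.pos_iff_nonempty.mp hm))
          fun i => ⟪gradient (f i) x, w⟫) + (1 / 2) * ‖w‖ ^ 2)
    (hθ : θ =
      (Finset.univ.sup' (Finset.univ_nonempty_iff.mpr (Fin.pos_iff_nonempty.mp hm))
          fun i => ⟪gradient (f i) x, Λ⟫) + (1 / 2) * ‖Λ‖ ^ 2) :
    ((¬∃ v : EuclideanSpace ℝ (Fin n), ∀ i, ⟪gradient (f i) x, v⟫ < 0) ↔ Λ = 0) ∧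
    (Λ = 0 ↔ θ = 0) ∧
    ((∃ v : EuclideanSpace ℝ (Fin n), ∀ i, ⟪gradient (f i) x, v⟫ < 0) →
      θ < 0 ∧ Λ ≠ 0) := by
  have hne : (Finset.univ : Finset (Fin m)).Nonempty :=
    Finset.univ_nonempty_iff.mpr (Fin.pos_iff_nonempty.mp hm)
  obtain ⟨φ, hφ⟩ : ∃ φ : EuclideanSpace ℝ (Fin n) → ℝ,
      ∀ v, φ v = Finset.univ.sup' hne fun i => ⟪gradient (f i) x, v⟫ := ⟨_, fun _ => rfl⟩
  simp only [← hφ] at hmin hθ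
  have h0 : φ 0 = 0 := by simp [hφ]
  have hlt : ∀ v, φ v < 0 ↔ ∀ i, ⟪gradient (f i) x, v⟫ < 0 := fun v => by
    simp [hφ, Finset.sup'_lt_iff]
  have hsmul : ∀ (t : ℝ) v, 0 ≤ t → φ (t • v) ≤ t * φ v := fun t v ht => by
    rw [hφ (t • v), Finset.sup'_le_iff]
    intro i hi
    rw [real_inner_smul_right, hφ v]
    exact mul_le_mul_of_nonneg_left
      (Finset.le_sup' (fun i => ⟪gradient (f i) x, v⟫) hi) ht
  have hΛθ : Λ = 0 → θ = 0 := by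
    rintro rfl
    simpa [h0] using hθ
  have hneg : (∃ v : EuclideanSpace ℝ (Fin n), ∀ i, ⟪gradient (f i) x, v⟫ < 0) → θ < 0 := by
    rintro ⟨v, hv⟩
    have hφv := (hlt v).2 hv
    have hN : 0 < ‖v‖ ^ 2 + 1 := by positivity
    -- This `t` satisfies `t ‖v‖² < -φ v`, so `t² ‖v‖² / 2` is less than half of `-t φ v`.
    obtain ⟨t, ht⟩ : ∃ t, t = -φ v / (‖v‖ ^ 2 + 1) := ⟨_, rfl⟩
    have htpos : 0 < t := ht ▸ div_pos (neg_pos.2 hφv) hN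
    have hte : t * (‖v‖ ^ 2 + 1) = -φ v := by rw [ht]; field_simp
    have h1 := hmin (t • v)
    have h2 := hsmul t v htpos.le
    rw [norm_smul, mul_pow, Real.norm_eq_abs, sq_abs] at h1
    have h3 : t ^ 2 * ‖v‖ ^ 2 = t * -φ v - t ^ 2 := by rw [← hte]; ring
    nlinarith [mul_pos htpos (neg_pos.2 hφv), sq_nonneg t]
  have hcrit : (¬∃ v : EuclideanSpace ℝ (Fin n), ∀ i, ⟪gradient (f i) x, v⟫ < 0) → Λ = 0 := by
    intro h
    have h1 : 0 ≤ φ Λ := not_lt.1 fun hl => h ⟨Λ, (hlt Λ).1 hl⟩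
    have h2 := hmin 0
    simp only [h0, norm_zero] at h2
    exact norm_eq_zero.1 (pow_eq_zero_iff two_ne_zero |>.1
      (le_antisymm (by linarith) (sq_nonneg ‖Λ‖)))
  exact ⟨⟨hcrit, fun h hv => (hneg hv).ne (hΛθ h)⟩,
    ⟨hΛθ, fun h => hcrit fun hv => (hneg hv).ne h⟩,
    fun hv => ⟨hneg hv, fun h => (hneg hv).ne (hΛθ h)⟩⟩
end

section
/- Let f_1, …, f_m : ℝ^n → ℝ be differentiable at x. Then for every i = 1, …, m one has ⟨Λf(x), ∇f_i(x)⟩ ≤ −(1/2)‖Λf(x)‖². -/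
open scoped RealInnerProductSpace

/-- For every `i`, `⟪Λf(x), ∇f_i(x)⟫ ≤ -(1/2)‖Λf(x)‖²`. -/
theorem inner_lambda_grad_le (n m : ℕ) (hm : 0 < m)
    (f : Fin m → EuclideanSpace ℝ (Fin n) → ℝ) (x : EuclideanSpace ℝ (Fin n))
    (hdiff : ∀ i, DifferentiableAt ℝ (f i) x)
    (Λ : EuclideanSpace ℝ (Fin n))
    (hmin : ∀ w : EuclideanSpace ℝ (Fin n),
      (Finset.univ.sup' (Finset.univ_nonempty_iff.mpr (Fin.pos_iff_nonempty.mp hm))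
          fun i => ⟪gradient (f i) x, Λ⟫) + (1 / 2) * ‖Λ‖ ^ 2 ≤
      (Finset.univ.sup' (Finset.univ_nonempty_iff.mpr (Fin.pos_iff_nonempty.mp hm))
          fun i => ⟪gradient (f i) x, w⟫) + (1 / 2) * ‖w‖ ^ 2) :
    ∀ i, ⟪Λ, gradient (f i) x⟫ ≤ -(1 / 2) * ‖Λ‖ ^ 2 := by
  intro i
  -- The zero direction has objective value `0`, so the minimal value is nonpositive.
  have h := hmin 0
  simp only [inner_zero_right, Finset.sup'_const, norm_zero] at h
  have hi := Finset.le_sup' (fun i => ⟪gradient (f i) x, Λ⟫) (Finset.mem_univ i)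
  rw [real_inner_comm]
  linarith
end

section
/- Let Ω ⊆ ℝ^n be open and f_1, …, f_m : ℝ^n → ℝ be differentiable on Ω with continuous gradients ∇f_i on Ω. Then the maps x ↦ Λf(x) and x ↦ θ_f(x) are continuous on Ω. -/
open scoped RealInnerProductSpace

/-!
For a tuple of vectors `g` put `F_g(v) = max_i ⟪g i, v⟫ + (1/2) ‖v‖²`. The max is convex, so `F_g` is
strongly convex, and a midpoint comparison shows that it grows at least like `(1/4) ‖w - v‖²` away
from a minimizer `v` (`dist_sq_le_of_isMin`). Adding this growth estimate for two tuples `g`, `g'`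
with minimizers `v`, `v'` gives `‖v - v'‖² ≤ 2 (∑ i, ‖g i - g' i‖) (‖v‖ + ‖v'‖)`
(`dist_sq_le_of_perturb`), and comparison with `F_g(0) = 0` gives `‖v‖ ≤ 2 ‖g i‖`. Applied to
`g i = ∇f_i(x)`, this explicit modulus tends to zero by continuity of the gradients, so `Λ` is
continuous; `θ` is then a finite maximum of continuous functions plus a continuous one.
-/

section Perturbation

variable {E ι : Type*} [NormedAddCommGroup E] [InnerProductSpace ℝ E] [Fintype ι]

/-- Quadratic growth at a minimizer. The constant `1 / 4` is what comparison with the midpoint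
`(v + w) / 2` yields; the sharp constant is `1 / 2`. -/
lemma dist_sq_le_of_isMin (hne : (Finset.univ : Finset ι).Nonempty) (g : ι → E) (v : E)
    (hv : ∀ w, (Finset.univ.sup' hne fun i => ⟪g i, v⟫) + (1 / 2) * ‖v‖ ^ 2 ≤
      (Finset.univ.sup' hne fun i => ⟪g i, w⟫) + (1 / 2) * ‖w‖ ^ 2) (w : E) :
    (Finset.univ.sup' hne fun i => ⟪g i, v⟫) + (1 / 2) * ‖v‖ ^ 2 + (1 / 4) * ‖v - w‖ ^ 2 ≤
      (Finset.univ.sup' hne fun i => ⟪g i, w⟫) + (1 / 2) * ‖w‖ ^ 2 := by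
  have h := hv ((1 / 2 : ℝ) • (v + w))
  have hconv : (Finset.univ.sup' hne fun i => ⟪g i, (1 / 2 : ℝ) • (v + w)⟫) ≤
      (1 / 2) * ((Finset.univ.sup' hne fun i => ⟪g i, v⟫) +
        (Finset.univ.sup' hne fun i => ⟪g i, w⟫)) := by
    refine Finset.sup'_le hne _ fun i hi => ?_
    rw [real_inner_smul_right, inner_add_right]
    have h1 := Finset.le_sup' (fun i => ⟪g i, v⟫) hi
    have h2 := Finset.le_sup' (fun i => ⟪g i, w⟫) hi
    linarith
  have hnorm : ‖(1 / 2 : ℝ) • (v + w)‖ ^ 2 = (1 / 4) * ‖v + w‖ ^ 2 := by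
    rw [norm_smul, mul_pow]; norm_num
  have hpar := parallelogram_law_with_norm ℝ v w
  rw [hnorm] at h
  nlinarith

lemma sup_inner_sub_le (hne : (Finset.univ : Finset ι).Nonempty) (g g' : ι → E) (v : E) :
    (Finset.univ.sup' hne fun i => ⟪g i, v⟫) ≤
      (Finset.univ.sup' hne fun i => ⟪g' i, v⟫) + (∑ i, ‖g i - g' i‖) * ‖v‖ := by
  refine Finset.sup'_le hne _ fun i hi => ?_
  have h1 := Finset.le_sup' (fun i => ⟪g' i, v⟫) hi
  have h2 : ‖g i - g' i‖ ≤ ∑ i, ‖g i - g' i‖ :=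
    Finset.single_le_sum (f := fun i => ‖g i - g' i‖) (fun _ _ => norm_nonneg _) hi
  have h3 := real_inner_le_norm (g i - g' i) v
  have h4 := mul_le_mul_of_nonneg_right h2 (norm_nonneg v)
  rw [inner_sub_left] at h3
  linarith

lemma norm_le_of_isMin (hne : (Finset.univ : Finset ι).Nonempty) (g : ι → E) (v : E)
    (hv : ∀ w, (Finset.univ.sup' hne fun i => ⟪g i, v⟫) + (1 / 2) * ‖v‖ ^ 2 ≤
      (Finset.univ.sup' hne fun i => ⟪g i, w⟫) + (1 / 2) * ‖w‖ ^ 2) (i : ι) :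
    ‖v‖ ≤ 2 * ‖g i‖ := by
  have h := hv 0
  simp only [inner_zero_right, norm_zero, Finset.sup'_const] at h
  have h1 := Finset.le_sup' (fun i => ⟪g i, v⟫) (Finset.mem_univ i)
  have h2 := neg_le_of_abs_le (abs_real_inner_le_norm (g i) v)
  by_contra! hlt
  nlinarith [norm_nonneg (g i), norm_nonneg v]

/-- Stability of the minimizer under perturbation of the vectors `g i`. -/
lemma dist_sq_le_of_perturb (hne : (Finset.univ : Finset ι).Nonempty) (g g' : ι → E) (v v' : E)
    (hv : ∀ w, (Finset.univ.sup' hne fun i => ⟪g i, v⟫) + (1 / 2) * ‖v‖ ^ 2 ≤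
      (Finset.univ.sup' hne fun i => ⟪g i, w⟫) + (1 / 2) * ‖w‖ ^ 2)
    (hv' : ∀ w, (Finset.univ.sup' hne fun i => ⟪g' i, v'⟫) + (1 / 2) * ‖v'‖ ^ 2 ≤
      (Finset.univ.sup' hne fun i => ⟪g' i, w⟫) + (1 / 2) * ‖w‖ ^ 2) :
    ‖v - v'‖ ^ 2 ≤ 2 * (∑ i, ‖g i - g' i‖) * (‖v‖ + ‖v'‖) := by
  have h1 := dist_sq_le_of_isMin hne g v hv v'
  have h2 := dist_sq_le_of_isMin hne g' v' hv' v
  have h3 := sup_inner_sub_le hne g g' v'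
  have h4 := sup_inner_sub_le hne g' g v
  simp only [norm_sub_rev (g' _) (g _)] at h4
  rw [norm_sub_rev v' v] at h2
  linarith

end Perturbation

/-- If the gradients `∇f_i` are continuous on the open set `Ω`, then
`x ↦ Λf(x)` and `x ↦ θ_f(x)` are continuous on `Ω`. -/
theorem lambda_theta_continuous (n m : ℕ) (hm : 0 < m)
    (Ω : Set (EuclideanSpace ℝ (Fin n))) (hΩ : IsOpen Ω)
    (f : Fin m → EuclideanSpace ℝ (Fin n) → ℝ)
    (hdiff : ∀ i, ∀ x ∈ Ω, DifferentiableAt ℝ (f i) x)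
    (hgrad : ∀ i, ContinuousOn (fun x => gradient (f i) x) Ω)
    (Λ : EuclideanSpace ℝ (Fin n) → EuclideanSpace ℝ (Fin n))
    (θ : EuclideanSpace ℝ (Fin n) → ℝ)
    (hmin : ∀ x ∈ Ω, ∀ w : EuclideanSpace ℝ (Fin n),
      (Finset.univ.sup' (Finset.univ_nonempty_iff.mpr (Fin.pos_iff_nonempty.mp hm))
          fun i => ⟪gradient (f i) x, Λ x⟫) + (1 / 2) * ‖Λ x‖ ^ 2 ≤
      (Finset.univ.sup' (Finset.univ_nonempty_iff.mpr (Fin.pos_iff_nonempty.mp hm))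
          fun i => ⟪gradient (f i) x, w⟫) + (1 / 2) * ‖w‖ ^ 2)
    (hθ : ∀ x ∈ Ω, θ x =
      (Finset.univ.sup' (Finset.univ_nonempty_iff.mpr (Fin.pos_iff_nonempty.mp hm))
          fun i => ⟪gradient (f i) x, Λ x⟫) + (1 / 2) * ‖Λ x‖ ^ 2) :
    ContinuousOn Λ Ω ∧ ContinuousOn θ Ω := by
  have hne : (Finset.univ : Finset (Fin m)).Nonempty :=
    Finset.univ_nonempty_iff.mpr (Fin.pos_iff_nonempty.mp hm)
  have hΛ : ContinuousOn Λ Ω := by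
    intro x hx
    have hbound : ∀ y ∈ Ω, ‖Λ y - Λ x‖ ≤
        √(2 * (∑ i, ‖gradient (f i) y - gradient (f i) x‖) *
          (2 * ‖gradient (f ⟨0, hm⟩) y‖ + 2 * ‖gradient (f ⟨0, hm⟩) x‖)) := by
      intro y hy
      refine Real.le_sqrt_of_sq_le ?_
      refine (dist_sq_le_of_perturb hne (fun i => gradient (f i) y) (fun i => gradient (f i) x)
        (Λ y) (Λ x) (hmin y hy) (hmin x hx)).trans ?_
      have hy0 := norm_le_of_isMin hne (fun i => gradient (f i) y) (Λ y) (hmin y hy) ⟨0, hm⟩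
      have hx0 := norm_le_of_isMin hne (fun i => gradient (f i) x) (Λ x) (hmin x hx) ⟨0, hm⟩
      gcongr
    have hcont : ContinuousWithinAt (fun y =>
        √(2 * (∑ i, ‖gradient (f i) y - gradient (f i) x‖) *
          (2 * ‖gradient (f ⟨0, hm⟩) y‖ + 2 * ‖gradient (f ⟨0, hm⟩) x‖))) Ω x := by
      have hg := fun i => hgrad i x hx
      have h0 := hg ⟨0, hm⟩
      have hs : ContinuousWithinAt
          (fun y => ∑ i, ‖gradient (f i) y - gradient (f i) x‖) Ω x :=
        tendsto_finsetSum _ fun i _ => ((hg i).sub continuousWithinAt_const).norm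
      exact ((continuousWithinAt_const.mul hs).mul
        ((continuousWithinAt_const.mul h0.norm).add continuousWithinAt_const)).sqrt
    have hlim := hcont.tendsto
    simp only [sub_self, norm_zero, Finset.sum_const_zero, mul_zero, zero_mul,
      Real.sqrt_zero] at hlim
    refine tendsto_iff_norm_sub_tendsto_zero.mpr ?_
    exact squeeze_zero' (Filter.Eventually.of_forall fun _ => norm_nonneg _)
      (Filter.eventually_of_mem self_mem_nhdsWithin hbound) hlim
  refine ⟨hΛ, ContinuousOn.congr ?_ hθ⟩
  exact (ContinuousOn.finset_sup'_apply _ fun i _ => (hgrad i).inner hΛ).add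
    (continuousOn_const.mul (hΛ.norm.pow 2))
end

section
/- Let W ⊆ ℝ^n be convex, let f_1, …, f_m : ℝ^n → ℝ be differentiable on a neighborhood of W, and suppose each ∇f_i is L-Lipschitz on W, i.e., ‖∇f_i(y) − ∇f_i(z)‖ ≤ L‖y − z‖ for all y, z ∈ W and all i. Then for all y, z ∈ W: ‖Λf(y) − Λf(z)‖² ≤ L ‖y − z‖ ( ‖Λf(y)‖ + ‖Λf(z)‖ ). -/
/-!
For a fixed base point `x`, the objective `v ↦ maxᵢ ⟪∇fᵢ(x), v⟫ + ½‖v‖²` is `1`-strongly convex, so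
it grows at least like `½‖w - Λ x‖²` away from its minimizer `Λ x` (`quadratic_growth`). Apply this
at `x = y` with `w = Λ z` and at `x = z` with `w = Λ y`, and add: the terms `½‖Λ y‖²` and `½‖Λ z‖²`
cancel, and `‖Λ y - Λ z‖²` is bounded by two differences of support functions
`maxᵢ ⟪∇fᵢ(y), v⟫ - maxᵢ ⟪∇fᵢ(z), v⟫`, up to sign, at `v = Λ z` and `v = Λ y`. Since corresponding
gradients are `L‖y - z‖`-close, each difference is at most `L‖y - z‖‖v‖` (`sup'_inner_le`).
-/

open scoped RealInnerProductSpace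

/-- Quadratic growth of the `1`-strongly convex function `φ + ½‖·‖²` at its minimizer. -/
lemma quadratic_growth {E : Type*} [NormedAddCommGroup E] [InnerProductSpace ℝ E]
    {φ : E → ℝ} (hφ : ConvexOn ℝ Set.univ φ) (u : E)
    (hu : ∀ w, φ u + (1 / 2) * ‖u‖ ^ 2 ≤ φ w + (1 / 2) * ‖w‖ ^ 2) (w : E) :
    φ u + (1 / 2) * ‖u‖ ^ 2 + (1 / 2) * ‖w - u‖ ^ 2 ≤ φ w + (1 / 2) * ‖w‖ ^ 2 := by
  -- Compare `u` with the point `s • u + (1 - s) • w` of the segment, and divide by `1 - s`.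
  have key : ∀ s : ℝ, 0 ≤ s → s < 1 → s * ((1 / 2) * ‖w - u‖ ^ 2) ≤
      φ w + (1 / 2) * ‖w‖ ^ 2 - (φ u + (1 / 2) * ‖u‖ ^ 2) := by
    intro s hs0 hs1
    have h1 := hu (s • u + (1 - s) • w)
    have h2 := hφ.2 (Set.mem_univ u) (Set.mem_univ w) hs0 (sub_nonneg.2 hs1.le)
      (add_sub_cancel s 1)
    have h3 : ‖s • u + (1 - s) • w‖ ^ 2 =
        s * ‖u‖ ^ 2 + (1 - s) * ‖w‖ ^ 2 - s * (1 - s) * ‖w - u‖ ^ 2 := by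
      rw [norm_add_sq_real, norm_sub_sq_real, norm_smul, norm_smul, mul_pow, mul_pow,
        real_inner_smul_left, real_inner_smul_right, Real.norm_eq_abs, Real.norm_eq_abs,
        sq_abs, sq_abs, real_inner_comm u w]
      ring
    simp only [smul_eq_mul] at h2
    rw [h3] at h1
    refine le_of_mul_le_mul_left ?_ (sub_pos.2 hs1)
    linarith
  -- Let `s → 1`.
  have hlim : Filter.Tendsto (fun s : ℝ => s * ((1 / 2) * ‖w - u‖ ^ 2)) (nhdsWithin 1 (Set.Iio 1))
      (nhds (1 * ((1 / 2) * ‖w - u‖ ^ 2))) :=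
    ((continuous_id.mul continuous_const).tendsto 1).mono_left nhdsWithin_le_nhds
  have hle := le_of_tendsto hlim (by
    filter_upwards [Ioo_mem_nhdsLT (zero_lt_one' ℝ)] with s hs using key s hs.1.le hs.2)
  linarith

lemma convexOn_sup'_inner {E ι : Type*} [NormedAddCommGroup E] [InnerProductSpace ℝ E]
    (s : Finset ι) (hs : s.Nonempty) (g : ι → E) :
    ConvexOn ℝ Set.univ fun v => s.sup' hs fun i => ⟪g i, v⟫ := by
  refine ⟨convex_univ, fun x _ y _ a b ha hb _ => Finset.sup'_le _ _ fun i hi => ?_⟩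
  rw [inner_add_right, real_inner_smul_right, real_inner_smul_right]
  exact add_le_add
    (mul_le_mul_of_nonneg_left (Finset.le_sup' (fun i => ⟪g i, x⟫) hi) ha)
    (mul_le_mul_of_nonneg_left (Finset.le_sup' (fun i => ⟪g i, y⟫) hi) hb)

lemma sup'_inner_le {E ι : Type*} [NormedAddCommGroup E] [InnerProductSpace ℝ E]
    (s : Finset ι) (hs : s.Nonempty) (g h : ι → E) (c : ℝ) (hc : ∀ i, ‖g i - h i‖ ≤ c) (v : E) :
    (s.sup' hs fun i => ⟪g i, v⟫) ≤ (s.sup' hs fun i => ⟪h i, v⟫) + c * ‖v‖ := by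
  refine Finset.sup'_le _ _ fun i hi => ?_
  have h1 := Finset.le_sup' (fun i => ⟪h i, v⟫) hi
  have h2 := real_inner_le_norm (g i - h i) v
  have h3 := mul_le_mul_of_nonneg_right (hc i) (norm_nonneg v)
  rw [inner_sub_left] at h2
  linarith

/-- If each `∇f_i` is `L`-Lipschitz on the convex set `W`, then
`‖Λf(y) − Λf(z)‖² ≤ L‖y − z‖(‖Λf(y)‖ + ‖Λf(z)‖)` for all `y, z ∈ W`. -/
theorem lambda_sq_diff_bound (n m : ℕ) (hm : 0 < m)
    (W U : Set (EuclideanSpace ℝ (Fin n))) (hW : Convex ℝ W)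
    (hU : IsOpen U) (hWU : W ⊆ U)
    (f : Fin m → EuclideanSpace ℝ (Fin n) → ℝ)
    (hdiff : ∀ i, ∀ x ∈ U, DifferentiableAt ℝ (f i) x)
    (L : ℝ)
    (hlip : ∀ i, ∀ y ∈ W, ∀ z ∈ W,
      ‖gradient (f i) y - gradient (f i) z‖ ≤ L * ‖y - z‖)
    (Λ : EuclideanSpace ℝ (Fin n) → EuclideanSpace ℝ (Fin n))
    (hmin : ∀ x ∈ W, ∀ w : EuclideanSpace ℝ (Fin n),
      (Finset.univ.sup' (Finset.univ_nonempty_iff.mpr (Fin.pos_iff_nonempty.mp hm))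
          fun i => ⟪gradient (f i) x, Λ x⟫) + (1 / 2) * ‖Λ x‖ ^ 2 ≤
      (Finset.univ.sup' (Finset.univ_nonempty_iff.mpr (Fin.pos_iff_nonempty.mp hm))
          fun i => ⟪gradient (f i) x, w⟫) + (1 / 2) * ‖w‖ ^ 2) :
    ∀ y ∈ W, ∀ z ∈ W,
      ‖Λ y - Λ z‖ ^ 2 ≤ L * ‖y - z‖ * (‖Λ y‖ + ‖Λ z‖) := by
  intro y hy z hz
  have hne : (Finset.univ : Finset (Fin m)).Nonempty :=
    Finset.univ_nonempty_iff.mpr (Fin.pos_iff_nonempty.mp hm)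
  have h1 := quadratic_growth (convexOn_sup'_inner Finset.univ hne fun i => gradient (f i) y)
    (Λ y) (hmin y hy) (Λ z)
  have h2 := quadratic_growth (convexOn_sup'_inner Finset.univ hne fun i => gradient (f i) z)
    (Λ z) (hmin z hz) (Λ y)
  have h3 := sup'_inner_le Finset.univ hne (fun i => gradient (f i) y)
    (fun i => gradient (f i) z) (L * ‖y - z‖) (fun i => hlip i y hy z hz) (Λ z)
  have h4 := sup'_inner_le Finset.univ hne (fun i => gradient (f i) z)
    (fun i => gradient (f i) y) (L * ‖y - z‖)
    (fun i => by rw [norm_sub_rev]; exact hlip i y hy z hz) (Λ y)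
  rw [norm_sub_rev] at h1
  linarith
end

section
/- Let f_1, …, f_m : ℝ^n → ℝ be differentiable at x. Then ‖Λf(x)‖ ≤ max_{i=1,…,m} ‖∇f_i(x)‖. -/
open scoped RealInnerProductSpace

/-!
Let `φ v = max_i ⟪∇f_i(x), v⟫`, which is positively homogeneous. Comparing the minimizer `Λ` with
`t • Λ`, `0 ≤ t < 1`, and dividing by `1 - t` gives `φ Λ ≤ -(1 + t) / 2 * ‖Λ‖ ^ 2`. By
Cauchy–Schwarz, `φ Λ ≥ -‖∇f_i(x)‖ * ‖Λ‖` for each `i`. If `‖∇f_i(x)‖ < ‖Λ‖` for some `i`, the choice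
`t = ‖∇f_i(x)‖ / ‖Λ‖` makes these two bounds incompatible, so `‖Λ‖` is bounded by every single
`‖∇f_i(x)‖`; a single index suffices for the bound by the maximum.
-/

/-- `‖Λf(x)‖ ≤ max_i ‖∇f_i(x)‖`. -/
theorem norm_lambda_le_max_norm_grad (n m : ℕ) (hm : 0 < m)
    (f : Fin m → EuclideanSpace ℝ (Fin n) → ℝ) (x : EuclideanSpace ℝ (Fin n))
    (hdiff : ∀ i, DifferentiableAt ℝ (f i) x)
    (Λ : EuclideanSpace ℝ (Fin n))
    (hmin : ∀ w : EuclideanSpace ℝ (Fin n),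
      (Finset.univ.sup' (Finset.univ_nonempty_iff.mpr (Fin.pos_iff_nonempty.mp hm))
          fun i => ⟪gradient (f i) x, Λ⟫) + (1 / 2) * ‖Λ‖ ^ 2 ≤
      (Finset.univ.sup' (Finset.univ_nonempty_iff.mpr (Fin.pos_iff_nonempty.mp hm))
          fun i => ⟪gradient (f i) x, w⟫) + (1 / 2) * ‖w‖ ^ 2) :
    ‖Λ‖ ≤ Finset.univ.sup' (Finset.univ_nonempty_iff.mpr (Fin.pos_iff_nonempty.mp hm))
        fun i => ‖gradient (f i) x‖ := by
  set H := Finset.univ_nonempty_iff.mpr (Fin.pos_iff_nonempty.mp hm)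
  let i₀ : Fin m := ⟨0, hm⟩
  refine le_trans ?_ (Finset.le_sup' (fun i => ‖gradient (f i) x‖) (Finset.mem_univ i₀))
  change ‖Λ‖ ≤ ‖gradient (f i₀) x‖
  by_contra! hlt
  have hM : 0 ≤ ‖gradient (f i₀) x‖ := norm_nonneg _
  have hi : ⟪gradient (f i₀) x, Λ⟫ ≤ Finset.univ.sup' H fun i => ⟪gradient (f i) x, Λ⟫ :=
    Finset.le_sup' (fun i => ⟪gradient (f i) x, Λ⟫) (Finset.mem_univ i₀)
  have hcs : -(‖gradient (f i₀) x‖ * ‖Λ‖) ≤ ⟪gradient (f i₀) x, Λ⟫ :=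
    neg_le_of_abs_le (abs_real_inner_le_norm _ _)
  have hN : 0 < ‖Λ‖ := hM.trans_lt hlt
  -- The competitor is `Λ` rescaled to the length `‖∇f_{i₀}(x)‖`.
  obtain ⟨t, ht, htN⟩ : ∃ t : ℝ, 0 ≤ t ∧ t * ‖Λ‖ = ‖gradient (f i₀) x‖ :=
    ⟨‖gradient (f i₀) x‖ / ‖Λ‖, by positivity, by field_simp⟩
  have hsup : (Finset.univ.sup' H fun i => ⟪gradient (f i) x, t • Λ⟫) ≤
      t * Finset.univ.sup' H fun i => ⟪gradient (f i) x, Λ⟫ := by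
    refine Finset.sup'_le _ _ fun i _ => ?_
    rw [real_inner_smul_right]
    exact mul_le_mul_of_nonneg_left
      (Finset.le_sup' (fun i => ⟪gradient (f i) x, Λ⟫) (Finset.mem_univ i)) ht
  have hw := hmin (t • Λ)
  rw [norm_smul, Real.norm_of_nonneg ht] at hw
  generalize (Finset.univ.sup' H fun i => ⟪gradient (f i) x, Λ⟫) = φ at *
  have ht1 : t < 1 := by
    by_contra! h
    nlinarith
  rw [← htN] at hcs
  have h1 : (1 - t) * (φ + (1 + t) / 2 * ‖Λ‖ ^ 2) ≤ 0 := by linarith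
  have h2 : φ + (1 + t) / 2 * ‖Λ‖ ^ 2 ≤ 0 := nonpos_of_mul_nonpos_right h1 (by linarith)
  have h3 : 0 < (1 - t) * ‖Λ‖ ^ 2 := mul_pos (by linarith) (by positivity)
  linarith
end

section
/- Let W ⊆ ℝ^n be convex and bounded, let f_1, …, f_m : ℝ^n → ℝ be differentiable on a neighborhood of W with each ∇f_i L-Lipschitz on W, and let M ≥ 0 satisfy ‖∇f_i(x)‖ ≤ M for all x ∈ W and all i. Then for all y, z ∈ W: ‖Λf(y) − Λf(z)‖ ≤ √(2 L M) · ‖y − z‖^{1/2}; i.e., x ↦ Λf(x) is Hölder continuous on W with exponent 1/2. -/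
open scoped RealInnerProductSpace

/-!
For gradients `g i` at a point, the function `w ↦ max_i ⟪g i, w⟫ + ‖w‖² / 2` is `1`-strongly convex,
so at its minimizer `a` it grows quadratically: its value at `w` exceeds its minimum by at least
`‖w - a‖² / 2` (`steepest_quadratic_growth`). Taking `w = 0` gives `‖a‖ ≤ max_i ‖g i‖`
(`norm_steepest_le`). Adding the growth inequality at `y` evaluated in `Λ z` to the one at `z`
evaluated in `Λ y`, the quadratic terms cancel and what remains is
`‖Λ y - Λ z‖² ≤ max_i ‖∇f_i y - ∇f_i z‖ * (‖Λ y‖ + ‖Λ z‖) ≤ (L ‖y - z‖) (2 M)`.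
-/

section steepest

variable {E ι : Type*} [NormedAddCommGroup E] [InnerProductSpace ℝ E] {s : Finset ι}

/-- Quadratic growth of the steepest descent objective `w ↦ max_i ⟪g i, w⟫ + ‖w‖² / 2` around a
minimizer `a`. -/
lemma steepest_quadratic_growth (hs : s.Nonempty) (g : ι → E) (a : E)
    (h : ∀ w, (s.sup' hs fun i => ⟪g i, a⟫) + (1 / 2) * ‖a‖ ^ 2 ≤
      (s.sup' hs fun i => ⟪g i, w⟫) + (1 / 2) * ‖w‖ ^ 2) (w : E) :
    (s.sup' hs fun i => ⟪g i, a⟫) + (1 / 2) * ‖a‖ ^ 2 + (1 / 2) * ‖w - a‖ ^ 2 ≤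
      (s.sup' hs fun i => ⟪g i, w⟫) + (1 / 2) * ‖w‖ ^ 2 := by
  set p := s.sup' hs fun i => ⟪g i, a⟫ with hp
  set q := s.sup' hs fun i => ⟪g i, w⟫ with hq
  -- Minimality tested on the segment from `a` to `w`, divided by the parameter `t`.
  have key : ∀ t : ℝ, 0 < t → t < 1 → p ≤ q + ⟪a, w - a⟫ + (1 / 2) * t * ‖w - a‖ ^ 2 := by
    intro t ht ht1
    have hconv : (s.sup' hs fun i => ⟪g i, a + t • (w - a)⟫) ≤ (1 - t) * p + t * q := by
      refine Finset.sup'_le hs _ fun i hi => ?_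
      have h1 : ⟪g i, a⟫ ≤ p := Finset.le_sup' (fun i => ⟪g i, a⟫) hi
      have h2 : ⟪g i, w⟫ ≤ q := Finset.le_sup' (fun i => ⟪g i, w⟫) hi
      rw [inner_add_right, inner_smul_right, inner_sub_right]
      nlinarith [mul_le_mul_of_nonneg_left h1 (sub_nonneg.2 ht1.le),
        mul_le_mul_of_nonneg_left h2 ht.le]
    have h3 := h (a + t • (w - a))
    rw [norm_add_sq_real, inner_smul_right, norm_smul, mul_pow, Real.norm_eq_abs, sq_abs] at h3
    refine le_of_mul_le_mul_left ?_ ht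
    nlinarith
  have hlim : p ≤ q + ⟪a, w - a⟫ := by
    refine le_of_forall_pos_le_add fun ε hε => ?_
    -- This `t` makes the error term `t * ‖w - a‖² / 2` at most `ε`.
    have hd : 0 ≤ ‖w - a‖ ^ 2 := sq_nonneg _
    have hpos : 0 < ‖w - a‖ ^ 2 + ε + 1 := by positivity
    refine (key (ε / (‖w - a‖ ^ 2 + ε + 1)) (by positivity)
      (by rw [div_lt_one hpos]; linarith)).trans ?_
    have : ε / (‖w - a‖ ^ 2 + ε + 1) * ‖w - a‖ ^ 2 ≤ ε := by
      rw [div_mul_eq_mul_div, div_le_iff₀ hpos]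
      nlinarith
    linarith
  have hid := norm_add_sq_real a (w - a)
  rw [add_sub_cancel] at hid
  linarith

lemma norm_steepest_le (hs : s.Nonempty) (g : ι → E) (a : E)
    (h : ∀ w, (s.sup' hs fun i => ⟪g i, a⟫) + (1 / 2) * ‖a‖ ^ 2 ≤
      (s.sup' hs fun i => ⟪g i, w⟫) + (1 / 2) * ‖w‖ ^ 2)
    {M : ℝ} (hM : ∀ i, ‖g i‖ ≤ M) : ‖a‖ ≤ M := by
  obtain ⟨i, hi⟩ := id hs
  have h0 := steepest_quadratic_growth hs g a h 0
  simp only [inner_zero_right, Finset.sup'_const, norm_zero, zero_sub, norm_neg] at h0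
  have h1 : ⟪g i, a⟫ ≤ s.sup' hs fun i => ⟪g i, a⟫ := Finset.le_sup' (fun i => ⟪g i, a⟫) hi
  have h2 := neg_le_of_abs_le (abs_real_inner_le_norm (g i) a)
  have h3 := mul_le_mul_of_nonneg_right (hM i) (norm_nonneg a)
  by_contra! hlt
  have h4 : 0 < ‖a‖ := ((norm_nonneg _).trans (hM i)).trans_lt hlt
  nlinarith

lemma sup_inner_le_add (hs : s.Nonempty) (g k : ι → E) (w : E) {D : ℝ}
    (hD : ∀ i, ‖g i - k i‖ ≤ D) :
    (s.sup' hs fun i => ⟪g i, w⟫) ≤ (s.sup' hs fun i => ⟪k i, w⟫) + D * ‖w‖ := by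
  refine Finset.sup'_le hs _ fun i hi => ?_
  have h1 : ⟪k i, w⟫ ≤ s.sup' hs fun i => ⟪k i, w⟫ := Finset.le_sup' (fun i => ⟪k i, w⟫) hi
  have h2 := real_inner_le_norm (g i - k i) w
  rw [inner_sub_left] at h2
  have h3 := mul_le_mul_of_nonneg_right (hD i) (norm_nonneg w)
  linarith

end steepest

/-- On a convex bounded set `W` where each `∇f_i` is `L`-Lipschitz and
bounded in norm by `M`, the map `x ↦ Λf(x)` is Hölder continuous with exponent `1/2`:
`‖Λf(y) − Λf(z)‖ ≤ √(2LM) ‖y − z‖^(1/2)`. -/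
theorem lambda_holder_one_half (n m : ℕ) (hm : 0 < m)
    (W U : Set (EuclideanSpace ℝ (Fin n))) (hW : Convex ℝ W)
    (hWb : Bornology.IsBounded W) (hU : IsOpen U) (hWU : W ⊆ U)
    (f : Fin m → EuclideanSpace ℝ (Fin n) → ℝ)
    (hdiff : ∀ i, ∀ x ∈ U, DifferentiableAt ℝ (f i) x)
    (L M : ℝ) (hM : 0 ≤ M)
    (hlip : ∀ i, ∀ y ∈ W, ∀ z ∈ W,
      ‖gradient (f i) y - gradient (f i) z‖ ≤ L * ‖y - z‖)
    (hbound : ∀ i, ∀ x ∈ W, ‖gradient (f i) x‖ ≤ M)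
    (Λ : EuclideanSpace ℝ (Fin n) → EuclideanSpace ℝ (Fin n))
    (hmin : ∀ x ∈ W, ∀ w : EuclideanSpace ℝ (Fin n),
      (Finset.univ.sup' (Finset.univ_nonempty_iff.mpr (Fin.pos_iff_nonempty.mp hm))
          fun i => ⟪gradient (f i) x, Λ x⟫) + (1 / 2) * ‖Λ x‖ ^ 2 ≤
      (Finset.univ.sup' (Finset.univ_nonempty_iff.mpr (Fin.pos_iff_nonempty.mp hm))
          fun i => ⟪gradient (f i) x, w⟫) + (1 / 2) * ‖w‖ ^ 2) :
    ∀ y ∈ W, ∀ z ∈ W,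
      ‖Λ y - Λ z‖ ≤ Real.sqrt (2 * L * M) * ‖y - z‖ ^ ((1 : ℝ) / 2) := by
  intro y hy z hz
  have hs : (Finset.univ : Finset (Fin m)).Nonempty :=
    Finset.univ_nonempty_iff.mpr (Fin.pos_iff_nonempty.mp hm)
  have hny := norm_steepest_le hs _ _ (hmin y hy) fun i => hbound i y hy
  have hnz := norm_steepest_le hs _ _ (hmin z hz) fun i => hbound i z hz
  have gy := steepest_quadratic_growth hs _ _ (hmin y hy) (Λ z)
  have gz := steepest_quadratic_growth hs _ _ (hmin z hz) (Λ y)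
  have dy := sup_inner_le_add hs (fun i => gradient (f i) y) (fun i => gradient (f i) z) (Λ z)
    fun i => hlip i y hy z hz
  have dz := sup_inner_le_add hs (fun i => gradient (f i) z) (fun i => gradient (f i) y) (Λ y)
    fun i => hlip i z hz y hy
  rw [norm_sub_rev (Λ z)] at gy
  rw [norm_sub_rev z] at dz
  -- `L` itself may be negative when `W` is a subsingleton.
  have hD : 0 ≤ L * ‖y - z‖ := (norm_nonneg _).trans (hlip ⟨0, hm⟩ y hy z hz)
  rw [← Real.sqrt_eq_rpow, ← Real.sqrt_mul' _ (norm_nonneg _)]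
  refine Real.le_sqrt_of_sq_le ?_
  have e1 := mul_le_mul_of_nonneg_left hny hD
  have e2 := mul_le_mul_of_nonneg_left hnz hD
  linarith
end

section
/- Let W ⊆ ℝ^n be convex, let f_1, …, f_m : ℝ^n → ℝ be differentiable on a neighborhood of W, and suppose each ∇f_i is L-Lipschitz on W. Then the map x ↦ ‖Λf(x)‖ is L-Lipschitz on W, i.e., | ‖Λf(y)‖ − ‖Λf(z)‖ | ≤ L‖y − z‖ for all y, z ∈ W. -/
/-!
For fixed `x`, write `φ(w) = max_i ⟪∇f_i(x), w⟫` and `v = Λ x`. Since `φ` is positively homogeneous,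
minimality of `v` along the ray through `v` gives `φ(v) = -‖v‖²` (`maxInner_minimizer`), and
minimality against the points of the ray through an arbitrary `w` gives `φ(w) ≥ -‖v‖ ‖w‖`
(`neg_norm_mul_norm_le_maxInner`). So `-‖v‖` is the least value of `φ` over the unit ball.

If the gradients at `y` and `z` differ by at most `c = L ‖y - z‖`, then `φ_y ≤ φ_z + c ‖·‖`, whence
`-‖Λ y‖ ‖Λ z‖ ≤ φ_y(Λ z) ≤ φ_z(Λ z) + c ‖Λ z‖ = -‖Λ z‖² + c ‖Λ z‖`. Dividing by `‖Λ z‖` gives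
`‖Λ z‖ ≤ ‖Λ y‖ + c`, and the claim follows by exchanging `y` and `z`.
-/

open scoped RealInnerProductSpace

section

variable {ι E : Type*} [Fintype ι] [NormedAddCommGroup E] [InnerProductSpace ℝ E]

/-- The support function `w ↦ max_i ⟪g i, w⟫` of a nonempty finite family of vectors. -/
noncomputable abbrev maxInner (h : (Finset.univ : Finset ι).Nonempty) (g : ι → E) (w : E) : ℝ :=
  Finset.univ.sup' h fun i => ⟪g i, w⟫

lemma maxInner_smul_le (h : (Finset.univ : Finset ι).Nonempty) (g : ι → E) (w : E) {t : ℝ}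
    (ht : 0 ≤ t) : maxInner h g (t • w) ≤ t * maxInner h g w := by
  refine Finset.sup'_le _ _ fun i hi => ?_
  rw [real_inner_smul_right]
  exact mul_le_mul_of_nonneg_left (Finset.le_sup' (fun i => ⟪g i, w⟫) hi) ht

lemma maxInner_zero (h : (Finset.univ : Finset ι).Nonempty) (g : ι → E) :
    maxInner h g 0 = 0 := by
  simp [maxInner]

/-- The minimality of `v`, tested against the point `t • w` of a ray. -/
lemma minimizer_le_ray {h : (Finset.univ : Finset ι).Nonempty} {g : ι → E} {v : E}
    (hv : ∀ w, maxInner h g v + (1 / 2) * ‖v‖ ^ 2 ≤ maxInner h g w + (1 / 2) * ‖w‖ ^ 2)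
    (w : E) {t : ℝ} (ht : 0 ≤ t) :
    maxInner h g v + (1 / 2) * ‖v‖ ^ 2 ≤ t * maxInner h g w + (1 / 2) * (t * ‖w‖) ^ 2 := by
  have h1 := hv (t • w)
  rw [norm_smul, Real.norm_of_nonneg ht] at h1
  linarith [maxInner_smul_le h g w ht]

lemma maxInner_minimizer {h : (Finset.univ : Finset ι).Nonempty} {g : ι → E} {v : E}
    (hv : ∀ w, maxInner h g v + (1 / 2) * ‖v‖ ^ 2 ≤ maxInner h g w + (1 / 2) * ‖w‖ ^ 2) :
    maxInner h g v = -‖v‖ ^ 2 := by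
  rcases eq_or_ne v 0 with rfl | hne
  · simp [maxInner_zero]
  have hs : 0 < ‖v‖ ^ 2 := by positivity
  have h0 := minimizer_le_ray hv v le_rfl
  have hφ : 0 ≤ -maxInner h g v / ‖v‖ ^ 2 := div_nonneg (by nlinarith) hs.le
  -- `t = -φ(v) / ‖v‖²` minimizes `t φ(v) + t² ‖v‖² / 2`,
  -- so `t = 1` is optimal only if `φ(v) = -‖v‖²`.
  have h1 := minimizer_le_ray hv v hφ
  rw [mul_pow] at h1
  generalize maxInner h g v = a at *
  generalize ‖v‖ ^ 2 = s at *
  have h2 : -a / s * a + 1 / 2 * ((-a / s) ^ 2 * s) = -(a ^ 2 / (2 * s)) := by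
    field_simp
    ring
  have h3 : a ^ 2 / (2 * s) ≤ -(a + 1 / 2 * s) := by linarith
  rw [div_le_iff₀ (by positivity)] at h3
  have h4 : (a + s) ^ 2 = 0 := le_antisymm (by nlinarith) (sq_nonneg _)
  linarith [pow_eq_zero_iff two_ne_zero |>.mp h4]

lemma neg_norm_mul_norm_le_maxInner {h : (Finset.univ : Finset ι).Nonempty} {g : ι → E} {v : E}
    (hv : ∀ w, maxInner h g v + (1 / 2) * ‖v‖ ^ 2 ≤ maxInner h g w + (1 / 2) * ‖w‖ ^ 2) (w : E) :
    -(‖v‖ * ‖w‖) ≤ maxInner h g w := by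
  rcases eq_or_ne w 0 with rfl | hw
  · simp [maxInner_zero]
  have hw' : 0 < ‖w‖ := norm_pos_iff.mpr hw
  rcases eq_or_ne v 0 with rfl | hne
  ·
    -- Here `0 ≤ t φ(w) + t² ‖w‖² / 2` for all `t ≥ 0`;
    -- if `φ(w) < 0` this fails at `t = -φ(w) / ‖w‖²`.
    rw [norm_zero, zero_mul, neg_zero]
    by_contra! hneg
    have h1 := minimizer_le_ray hv w (t := -maxInner h g w / ‖w‖ ^ 2)
      (div_nonneg (by linarith) (by positivity))
    rw [maxInner_zero, norm_zero] at h1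
    generalize maxInner h g w = a at *
    have h2 : -a / ‖w‖ ^ 2 * a + 1 / 2 * (-a / ‖w‖ ^ 2 * ‖w‖) ^ 2 = -(a ^ 2 / (2 * ‖w‖ ^ 2)) := by
      field_simp
      ring
    have h3 : 0 < a ^ 2 / (2 * ‖w‖ ^ 2) := div_pos (sq_pos_of_neg hneg) (by positivity)
    linarith
  have hv' : 0 < ‖v‖ := norm_pos_iff.mpr hne
  -- Rescale `w` to have the norm of `v`.
  have h1 := minimizer_le_ray hv w (t := ‖v‖ / ‖w‖) (by positivity)
  rw [maxInner_minimizer hv, div_mul_cancel₀ _ hw'.ne'] at h1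
  have h2 : -‖v‖ ^ 2 ≤ ‖v‖ * maxInner h g w / ‖w‖ := by
    rw [mul_div_right_comm]; linarith
  rw [le_div_iff₀ hw'] at h2
  nlinarith

/-- One-sided form of the Lipschitz estimate. -/
lemma norm_minimizer_le {h : (Finset.univ : Finset ι).Nonempty} {g g' : ι → E} {v v' : E} {c : ℝ}
    (hv : ∀ w, maxInner h g v + (1 / 2) * ‖v‖ ^ 2 ≤ maxInner h g w + (1 / 2) * ‖w‖ ^ 2)
    (hv' : ∀ w, maxInner h g' v' + (1 / 2) * ‖v'‖ ^ 2 ≤ maxInner h g' w + (1 / 2) * ‖w‖ ^ 2)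
    (hc : ∀ i, ‖g i - g' i‖ ≤ c) : ‖v'‖ ≤ ‖v‖ + c := by
  have hc0 : 0 ≤ c := by
    obtain ⟨i, -⟩ := h
    exact (norm_nonneg _).trans (hc i)
  rcases eq_or_ne v' 0 with rfl | hne
  · rw [norm_zero]
    positivity
  have hpos : 0 < ‖v'‖ := norm_pos_iff.mpr hne
  have h1 : maxInner h g v' ≤ maxInner h g' v' + c * ‖v'‖ := by
    refine Finset.sup'_le _ _ fun i hi => ?_
    have h2 : ⟪g i - g' i, v'⟫ ≤ c * ‖v'‖ :=
      (real_inner_le_norm _ _).trans (mul_le_mul_of_nonneg_right (hc i) hpos.le)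
    rw [inner_sub_left] at h2
    have h3 : ⟪g' i, v'⟫ ≤ maxInner h g' v' := Finset.le_sup' (fun i => ⟪g' i, v'⟫) hi
    linarith
  have h2 := neg_norm_mul_norm_le_maxInner hv v'
  rw [maxInner_minimizer hv'] at h1
  refine le_of_mul_le_mul_right ?_ hpos
  nlinarith

end

/-- If each `∇f_i` is `L`-Lipschitz on the convex set `W`, then
`x ↦ ‖Λf(x)‖` is `L`-Lipschitz on `W`. -/
theorem norm_lambda_lipschitz (n m : ℕ) (hm : 0 < m)
    (W U : Set (EuclideanSpace ℝ (Fin n))) (hW : Convex ℝ W)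
    (hU : IsOpen U) (hWU : W ⊆ U)
    (f : Fin m → EuclideanSpace ℝ (Fin n) → ℝ)
    (hdiff : ∀ i, ∀ x ∈ U, DifferentiableAt ℝ (f i) x)
    (L : ℝ)
    (hlip : ∀ i, ∀ y ∈ W, ∀ z ∈ W,
      ‖gradient (f i) y - gradient (f i) z‖ ≤ L * ‖y - z‖)
    (Λ : EuclideanSpace ℝ (Fin n) → EuclideanSpace ℝ (Fin n))
    (hmin : ∀ x ∈ W, ∀ w : EuclideanSpace ℝ (Fin n),
      (Finset.univ.sup' (Finset.univ_nonempty_iff.mpr (Fin.pos_iff_nonempty.mp hm))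
          fun i => ⟪gradient (f i) x, Λ x⟫) + (1 / 2) * ‖Λ x‖ ^ 2 ≤
      (Finset.univ.sup' (Finset.univ_nonempty_iff.mpr (Fin.pos_iff_nonempty.mp hm))
          fun i => ⟪gradient (f i) x, w⟫) + (1 / 2) * ‖w‖ ^ 2) :
    ∀ y ∈ W, ∀ z ∈ W, |‖Λ y‖ - ‖Λ z‖| ≤ L * ‖y - z‖ := by
  intro y hy z hz
  have hyz := norm_minimizer_le (v := Λ y) (v' := Λ z) (g := fun i => gradient (f i) y)
    (g' := fun i => gradient (f i) z) (hmin y hy) (hmin z hz) (fun i => hlip i y hy z hz)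
  have hzy := norm_minimizer_le (v := Λ z) (v' := Λ y) (g := fun i => gradient (f i) z)
    (g' := fun i => gradient (f i) y) (hmin z hz) (hmin y hy) (fun i => hlip i z hz y hy)
  rw [norm_sub_rev z y] at hzy
  rw [abs_sub_le_iff]
  constructor <;> linarith
end

section
/- Let f_1, f_2 : ℝ² → ℝ be given by f_1(r, s) = (r² + s²)/2 and f_2(r, s) = r, and for 0 < t < π/2 set y_t = cos t · (cos t, sin t) and z_t = (1, cos t · sin t). Then Λf(y_t) = −y_t and Λf(z_t) = −(1, 0); consequently ‖Λf(y_t) − Λf(z_t)‖ = sin t and ‖y_t − z_t‖ = (sin t)². -/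
/-!
The steepest descent direction is minus the element `d` of least norm in the segment joining the
two gradients `a` and `b`. At both points considered here, `d` is itself one of the gradients:
`∇f₁(y_t) = y_t` at `y_t`, because `⟪y_t, (1, 0)⟫ = cos² t = ‖y_t‖²`, and `∇f₂ = (1, 0)` at `z_t`,
because `⟪∇f₁(z_t), (1, 0)⟫ = 1`. The lemma `eq_neg_of_minimizer` turns these inner product
relations into the value of the minimizer.
-/

open scoped RealInnerProductSpace

/-- The point `(a, b)` of `ℝ²` (with the Euclidean structure). -/
noncomputable def pt (a b : ℝ) : EuclideanSpace ℝ (Fin 2) :=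
  (WithLp.equiv 2 (Fin 2 → ℝ)).symm ![a, b]

/-- `f₁(r, s) = (r² + s²)/2`. -/
noncomputable def f₁ (p : EuclideanSpace ℝ (Fin 2)) : ℝ := (p 0 ^ 2 + p 1 ^ 2) / 2

/-- `f₂(r, s) = r`. -/
noncomputable def f₂ (p : EuclideanSpace ℝ (Fin 2)) : ℝ := p 0

/-- The objective `v ↦ max_{i=1,2} ⟪∇f_i(x), v⟫ + (1/2)‖v‖²` whose unique minimizer
is the multiobjective steepest descent direction `Λf(x)`. -/
noncomputable def Φ (x v : EuclideanSpace ℝ (Fin 2)) : ℝ :=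
  max ⟪gradient f₁ x, v⟫ ⟪gradient f₂ x, v⟫ + (1 / 2) * ‖v‖ ^ 2

lemma gradient_f₁ (x : EuclideanSpace ℝ (Fin 2)) : gradient f₁ x = x := by
  have hf : f₁ = fun p => (1 / 2 : ℝ) * ‖p‖ ^ 2 := by
    funext p
    simp [f₁, EuclideanSpace.norm_sq_eq, Fin.sum_univ_two]
    ring
  have h : HasGradientAt f₁ x x := by
    rw [hasGradientAt_iff_hasFDerivAt, hf]
    refine ((hasStrictFDerivAt_norm_sq x).hasFDerivAt.const_mul (1 / 2 : ℝ)).congr_fderiv ?_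
    ext v
    simp
  exact h.gradient

lemma gradient_f₂ (x : EuclideanSpace ℝ (Fin 2)) : gradient f₂ x = pt 1 0 := by
  have h : HasGradientAt f₂ (pt 1 0) x := by
    rw [hasGradientAt_iff_hasFDerivAt]
    refine ((EuclideanSpace.proj (𝕜 := ℝ) (0 : Fin 2)).hasFDerivAt (x := x)).congr_fderiv ?_
    ext v
    simp [pt, PiLp.inner_apply, Fin.sum_univ_two]
  exact h.gradient

/-- If `d` is one of the gradients `a`, `b` and both have inner product at least `‖d‖²` with `d`,
then no `v ≠ -d` has an objective value as small as that of `-d`: the objective at `-d` is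
at most `-‖d‖² / 2`, while at `v` it is at least `⟪d, v⟫ + ‖v‖² / 2 = ‖v + d‖² / 2 - ‖d‖² / 2`. -/
lemma eq_neg_of_minimizer {E : Type*} [NormedAddCommGroup E] [InnerProductSpace ℝ E]
    {a b d v : E} (hd : d = a ∨ d = b) (ha : ‖d‖ ^ 2 ≤ ⟪a, d⟫) (hb : ‖d‖ ^ 2 ≤ ⟪b, d⟫)
    (hv : max ⟪a, v⟫ ⟪b, v⟫ + (1 / 2) * ‖v‖ ^ 2 ≤
      max ⟪a, -d⟫ ⟪b, -d⟫ + (1 / 2) * ‖-d‖ ^ 2) : v = -d := by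
  have hle : ⟪d, v⟫ ≤ max ⟪a, v⟫ ⟪b, v⟫ := by
    rcases hd with rfl | rfl
    · exact le_max_left _ _
    · exact le_max_right _ _
  have hge : max ⟪a, -d⟫ ⟪b, -d⟫ ≤ -‖d‖ ^ 2 := by
    simp only [inner_neg_right]
    exact max_le (by linarith) (by linarith)
  have hsq : ‖v + d‖ ^ 2 ≤ 0 := by
    rw [norm_add_sq_real, real_inner_comm]
    rw [norm_neg] at hv
    linarith
  have h0 : ‖v + d‖ = 0 := pow_eq_zero_iff two_ne_zero |>.1 (le_antisymm hsq (sq_nonneg _))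
  exact eq_neg_of_add_eq_zero_left (norm_eq_zero.1 h0)

lemma inner_pt (a b c d : ℝ) : ⟪pt a b, pt c d⟫ = a * c + b * d := by
  simp [pt, PiLp.inner_apply, Fin.sum_univ_two]
  ring

lemma norm_sq_pt (a b : ℝ) : ‖pt a b‖ ^ 2 = a ^ 2 + b ^ 2 := by
  rw [← real_inner_self_eq_norm_sq, inner_pt]
  ring

lemma smul_pt (c a b : ℝ) : c • pt a b = pt (c * a) (c * b) := by
  ext i
  fin_cases i <;> simp [pt]

lemma pt_sub_pt (a b c d : ℝ) : pt a b - pt c d = pt (a - c) (b - d) := by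
  ext i
  fin_cases i <;> simp [pt]

/-- For `y_t = cos t (cos t, sin t)` and `z_t = (1, cos t sin t)`,
`Λf(y_t) = -y_t`, `Λf(z_t) = -(1, 0)`, `‖Λf(y_t) - Λf(z_t)‖ = sin t` and
`‖y_t - z_t‖ = (sin t)²`. -/
theorem example_lambda_values (t : ℝ) (ht0 : 0 < t) (htπ : t < Real.pi / 2)
    (vy vz : EuclideanSpace ℝ (Fin 2))
    (hy : ∀ w, Φ (Real.cos t • pt (Real.cos t) (Real.sin t)) vy ≤
      Φ (Real.cos t • pt (Real.cos t) (Real.sin t)) w)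
    (hz : ∀ w, Φ (pt 1 (Real.cos t * Real.sin t)) vz ≤
      Φ (pt 1 (Real.cos t * Real.sin t)) w) :
    vy = -(Real.cos t • pt (Real.cos t) (Real.sin t)) ∧
    vz = -pt 1 0 ∧
    ‖vy - vz‖ = Real.sin t ∧
    ‖Real.cos t • pt (Real.cos t) (Real.sin t) - pt 1 (Real.cos t * Real.sin t)‖ =
      Real.sin t ^ 2 := by
  have hs : 0 < Real.sin t := Real.sin_pos_of_pos_of_lt_pi ht0 (by linarith)
  have hcs : Real.sin t ^ 2 + Real.cos t ^ 2 = 1 := Real.sin_sq_add_cos_sq t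
  rw [smul_pt] at hy ⊢
  simp only [Φ, gradient_f₁, gradient_f₂] at hy hz
  have hvy : vy = -pt (Real.cos t * Real.cos t) (Real.cos t * Real.sin t) := by
    refine eq_neg_of_minimizer (Or.inl rfl) (real_inner_self_eq_norm_sq _).ge ?_ (hy _)
    rw [norm_sq_pt, inner_pt]
    apply le_of_eq
    linear_combination Real.cos t ^ 2 * hcs
  have hvz : vz = -pt 1 0 := by
    refine eq_neg_of_minimizer (Or.inr rfl) ?_ (real_inner_self_eq_norm_sq _).ge (hz _)
    rw [norm_sq_pt, inner_pt]
    norm_num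
  refine ⟨hvy, hvz, ?_, ?_⟩
  · rw [hvy, hvz, neg_sub_neg, pt_sub_pt]
    rw [← sq_eq_sq₀ (norm_nonneg _) hs.le, norm_sq_pt]
    linear_combination (Real.cos t ^ 2 - 1) * hcs
  · rw [pt_sub_pt, ← sq_eq_sq₀ (norm_nonneg _) (sq_nonneg _), norm_sq_pt]
    linear_combination (Real.cos t ^ 2 - 1 - Real.sin t ^ 2) * hcs
end

section
/- Let f_1, f_2 : ℝ² → ℝ be given by f_1(r, s) = (r² + s²)/2 and f_2(r, s) = r. Then the map x ↦ Λf(x) is not Lipschitz continuous on any neighborhood of the point (1, 0): for every neighborhood V of (1, 0) and every constant C ≥ 0 there exist y, z ∈ V with ‖Λf(y) − Λf(z)‖ > C‖y − z‖. -/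
/-!
The minimizer of `v ↦ max ⟪g₁, v⟫ ⟪g₂, v⟫ + ‖v‖² / 2` is minus the projection of `0` onto the
segment `[g₁, g₂]`. Here `∇f₁ x = x` and `∇f₂ x = (1, 0)`, so `Λ x` is minus the point of least
norm on the segment from `x` to `(1, 0)`. On the circle `r² + s² = r` this point is `x` itself,
while on the line `r = 1` it is `(1, 0)`. For `t > 0`, the points

`y = (1 / (1 + t²), t / (1 + t²))` on the circle, and `z = (1, t / (1 + t²))` on the line,

satisfy `‖y - z‖ = t² / (1 + t²)`, whereas the second coordinate of `Λ y - Λ z` is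
`-t / (1 + t²)`. The difference quotient is therefore at least `1 / t`, which is unbounded as
`t → 0⁺`, and both points then tend to `(1, 0)`. At `y` and `z` the projection is an
endpoint of the segment, so `eq_neg_of_minimizes` (with `gradient_f₁` and `gradient_f₂`) is all that is needed
about the minimizer.
-/

open scoped RealInnerProductSpace

@[simp] lemma pt_zero (a b : ℝ) : pt a b 0 = a := rfl

@[simp] lemma pt_one (a b : ℝ) : pt a b 1 = b := rfl

lemma inner_eq (u v : EuclideanSpace ℝ (Fin 2)) : ⟪u, v⟫ = u 0 * v 0 + u 1 * v 1 := by
  simp [PiLp.inner_apply, Fin.sum_univ_two, mul_comm]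

lemma continuous_pt {a b : ℝ → ℝ} (ha : Continuous a) (hb : Continuous b) :
    Continuous fun t => pt (a t) (b t) := by
  refine (PiLp.continuous_toLp 2 (fun _ : Fin 2 => ℝ)).comp (continuous_pi fun i => ?_)
  fin_cases i
  · exact ha
  · exact hb

/-- If `‖g‖² ≤ ⟪h, g⟫`, so that `g` is the point of least norm on the segment `[g, h]`, then `-g`
is the only minimizer of `v ↦ max ⟪g, v⟫ ⟪h, v⟫ + ‖v‖² / 2`. Minimality of `v` is only
needed against the competitor `-g`. -/
lemma eq_neg_of_minimizes {g h v : EuclideanSpace ℝ (Fin 2)} (hg : ⟪g, g⟫ ≤ ⟪h, g⟫)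
    (hv : max ⟪g, v⟫ ⟪h, v⟫ + (1 / 2) * ‖v‖ ^ 2
      ≤ max ⟪g, -g⟫ ⟪h, -g⟫ + (1 / 2) * ‖-g‖ ^ 2) : v = -g := by
  have hmax : max ⟪g, -g⟫ ⟪h, -g⟫ = -⟪g, g⟫ := by
    rw [inner_neg_right, inner_neg_right]
    exact max_eq_left (neg_le_neg hg)
  rw [hmax, norm_neg, real_inner_self_eq_norm_sq] at hv
  have hle := le_max_left ⟪g, v⟫ ⟪h, v⟫
  -- completing the square: `⟪g, v⟫ + ‖v‖² / 2 = ‖v + g‖² / 2 - ‖g‖² / 2`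
  have hsq := norm_add_sq_real v g
  rw [real_inner_comm] at hsq
  have h0 : ‖v + g‖ = 0 := by
    have : ‖v + g‖ ^ 2 ≤ 0 := by linarith
    exact pow_eq_zero_iff two_ne_zero |>.1 (le_antisymm this (sq_nonneg _))
  exact eq_neg_of_add_eq_zero_left (norm_eq_zero.1 h0)

/-- `Λf` is not Lipschitz on any neighborhood of `(1, 0)`: for every
neighborhood `V` of `(1,0)` and every `C ≥ 0` there are `y, z ∈ V` with
`‖Λf(y) - Λf(z)‖ > C ‖y - z‖`. -/
theorem lambda_not_lipschitz (Λ : EuclideanSpace ℝ (Fin 2) → EuclideanSpace ℝ (Fin 2))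
    (hmin : ∀ x w, Φ x (Λ x) ≤ Φ x w) :
    ∀ V ∈ nhds (pt 1 0), ∀ C : ℝ, 0 ≤ C →
      ∃ y ∈ V, ∃ z ∈ V, C * ‖y - z‖ < ‖Λ y - Λ z‖ := by
  intro V hV C hC
  have hy0 : ∀ᶠ t : ℝ in nhdsWithin 0 (Set.Ioi 0),
      pt (1 / (1 + t ^ 2)) (t / (1 + t ^ 2)) ∈ V := by
    have hc : Continuous fun t : ℝ => pt (1 / (1 + t ^ 2)) (t / (1 + t ^ 2)) := by
      apply continuous_pt
      · exact continuous_const.div (by fun_prop) fun t => by positivity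
      · exact continuous_id.div (by fun_prop) fun t => by positivity
    refine (hc.continuousAt.mono_left nhdsWithin_le_nhds).eventually_mem ?_
    simpa using hV
  have hz0 : ∀ᶠ t : ℝ in nhdsWithin 0 (Set.Ioi 0), pt 1 (t / (1 + t ^ 2)) ∈ V := by
    have hc : Continuous fun t : ℝ => pt 1 (t / (1 + t ^ 2)) := by
      apply continuous_pt continuous_const
      exact continuous_id.div (by fun_prop) fun t => by positivity
    refine (hc.continuousAt.mono_left nhdsWithin_le_nhds).eventually_mem ?_
    simpa using hV
  have hsmall : ∀ᶠ t : ℝ in nhdsWithin 0 (Set.Ioi 0), C * t < 1 := by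
    have hc : Continuous fun t : ℝ => C * t := by fun_prop
    refine (hc.continuousAt.mono_left nhdsWithin_le_nhds).eventually_lt_const ?_
    simp
  obtain ⟨t, hyV, hzV, hCt, ht⟩ :=
    (hy0.and (hz0.and (hsmall.and self_mem_nhdsWithin))).exists
  have ht : 0 < t := ht
  have hd : 0 < 1 + t ^ 2 := by positivity
  set y := pt (1 / (1 + t ^ 2)) (t / (1 + t ^ 2)) with hy
  set z := pt 1 (t / (1 + t ^ 2)) with hz
  have hΛy : Λ y = -y := by
    have hm := hmin y (-y)
    rw [Φ, Φ, gradient_f₁, gradient_f₂] at hm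
    refine eq_neg_of_minimizes (le_of_eq ?_) hm
    simp only [inner_eq, hy, pt_zero, pt_one]
    field_simp
    ring
  have hΛz : Λ z = -pt 1 0 := by
    have hm := hmin z (-pt 1 0)
    rw [Φ, Φ, gradient_f₁, gradient_f₂, max_comm, max_comm ⟪z, -pt 1 0⟫] at hm
    refine eq_neg_of_minimizes (le_of_eq ?_) hm
    simp only [inner_eq, hz, pt_zero, pt_one]
    ring
  have hyz : ‖y - z‖ = t ^ 2 / (1 + t ^ 2) := by
    have h0 : 1 / (1 + t ^ 2) - 1 = -(t ^ 2 / (1 + t ^ 2)) := by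
      field_simp
      ring
    rw [EuclideanSpace.norm_eq, Fin.sum_univ_two, PiLp.sub_apply, PiLp.sub_apply, hy, hz,
      pt_zero, pt_zero, pt_one, pt_one, h0, sub_self, norm_zero, norm_neg, Real.norm_eq_abs,
      abs_of_nonneg (by positivity), zero_pow two_ne_zero, add_zero]
    exact Real.sqrt_sq (by positivity)
  have hΛ : t / (1 + t ^ 2) ≤ ‖Λ y - Λ z‖ := by
    have h1 := PiLp.norm_apply_le (Λ y - Λ z) 1
    have h2 : (Λ y - Λ z) 1 = -(t / (1 + t ^ 2)) := by
      rw [hΛy, hΛz, hy]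
      simp
    rwa [h2, norm_neg, Real.norm_eq_abs, abs_of_nonneg (by positivity)] at h1
  refine ⟨y, hyV, z, hzV, lt_of_lt_of_le ?_ hΛ⟩
  rw [hyz, ← mul_div_assoc]
  exact div_lt_div_of_pos_right (by nlinarith) hd
end
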